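/- Let T be a finite index set, let m ∉ T, and let s be a real-valued function on T ∪ {m} with 0 ≤ s_j ≤ 1 for all j. Define, for any finite set J, S(J) = 1 − ∏_{j ∈ J}(1 − s_j) − ∑_{j ∈ J} s_j · ∏_{z ∈ J, z ≠ j}(1 − s_z). Then S(T ∪ {m}) ≥ S(T); that is, the parameter collision rate does not decrease when an additional device is added to the aggregation set. -/

import Mathlib

/-- The parameter collision rate of a finite aggregation set `J` of devices with sparsity
rates `s_j ∈ [0,1]`:
`S(J) = 1 − ∏_{j ∈ J} (1 − s_j) − ∑_{j ∈ J} s_j ∏_{z ∈ J, z ≠ j} (1 − s_z)`. -/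
def collisionRate {ι : Type*} [DecidableEq ι] (s : ι → ℝ) (J : Finset ι) : ℝ :=
  1 - ∏ j ∈ J, (1 - s j) - ∑ j ∈ J, s j * ∏ z ∈ J.erase j, (1 - s z)

/-!
If each device `j` independently uses a given parameter with probability `s j`, a collision means
that at least two devices use it. A new device `m` keeps every existing collision and turns the
event "exactly one device of `T` uses the parameter" into a collision with probability `s m`.
Hence the collision rate grows by exactly `s m` times the probability of that event.
-/

theorem sum_mul_prod_erase_insert {ι R : Type*} [DecidableEq ι] [CommSemiring R]
    {T : Finset ι} {m : ι} (hm : m ∉ T) (f g : ι → R) :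
    ∑ j ∈ insert m T, f j * ∏ z ∈ (insert m T).erase j, g z =
      f m * ∏ z ∈ T, g z + g m * ∑ j ∈ T, f j * ∏ z ∈ T.erase j, g z := by
  rw [Finset.sum_insert hm, Finset.erase_insert hm, Finset.mul_sum]
  congr 1
  refine Finset.sum_congr rfl fun j hj => ?_
  have hmj : m ≠ j := (ne_of_mem_of_not_mem hj hm).symm
  rw [Finset.erase_insert_of_ne hmj, Finset.prod_insert (mt Finset.mem_of_mem_erase hm),
    mul_left_comm]

/-- The probability that exactly one device of `J` uses a given parameter, when device `j` uses it
independently with probability `s j`; it is the last term subtracted in `collisionRate`. It is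
defined algebraically, so that `s` may take values in any commutative ring. -/
def soleUseRate {ι R : Type*} [DecidableEq ι] [CommRing R] (s : ι → R) (J : Finset ι) : R :=
  ∑ j ∈ J, s j * ∏ z ∈ J.erase j, (1 - s z)

theorem soleUseRate_nonneg {ι R : Type*} [DecidableEq ι] [CommRing R] [PartialOrder R]
    [IsOrderedRing R] {s : ι → R} {J : Finset ι} (hs : ∀ j ∈ J, 0 ≤ s j ∧ s j ≤ 1) :
    0 ≤ soleUseRate s J :=
  Finset.sum_nonneg fun j hj => mul_nonneg (hs j hj).1 <|
    Finset.prod_nonneg fun z hz => sub_nonneg.2 (hs z (Finset.mem_of_mem_erase hz)).2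

theorem collisionRate_insert {ι : Type*} [DecidableEq ι] {T : Finset ι} {m : ι} (hm : m ∉ T)
    (s : ι → ℝ) :
    collisionRate s (insert m T) = collisionRate s T + s m * soleUseRate s T := by
  simp only [collisionRate, soleUseRate, Finset.prod_insert hm, sum_mul_prod_erase_insert hm]
  ring

/-- Adding an additional device `m ∉ T` (with sparsity rate `s m ∈ [0,1]`) to an
aggregation set `T` does not decrease the parameter collision rate: `S(T ∪ {m}) ≥ S(T)`. -/
theorem collisionRate_mono_insert
    {ι : Type*} [DecidableEq ι] (T : Finset ι) (m : ι) (hm : m ∉ T)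
    (s : ι → ℝ) (hs : ∀ j ∈ insert m T, 0 ≤ s j ∧ s j ≤ 1) :
    collisionRate s T ≤ collisionRate s (insert m T) := by
  have hsm : 0 ≤ s m := (hs m (Finset.mem_insert_self m T)).1
  have hsT : 0 ≤ soleUseRate s T :=
    soleUseRate_nonneg fun j hj => hs j (Finset.mem_insert_of_mem hj)
  rw [collisionRate_insert hm]
  exact le_add_of_nonneg_right (mul_nonneg hsm hsT)
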